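/- Let S = ⟨S, δ, L⟩ and S' = ⟨S', δ', L'⟩ be FLTSs witnessed w.r.t. fposΔPDL and Z a crisp directed simulation between them. Then for all x, y ∈ S, x', y' ∈ S', every formula φ of fposΔPDL, every program α of fpos∃ΔPDL and every program γ of fpos∀ΔPDL: (a) if Z(x,x') holds then φ^S(x) ≤ φ^S'(x'); (b) if Z(x,x') holds and α^S(x,y) > 0, then there exists y' ∈ S' with α^S(x,y) ≤ α^S'(x',y') and Z(y,y'); (c) if Z(x,x') holds and γ^S'(x',y') > 0, then there exists y ∈ S with γ^S'(x',y') ≤ γ^S(x,y) and Z(y,y'). -/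

import Mathlib

open unitInterval

noncomputable section
attribute [local instance] Classical.propDecidable

instance : Fact ((0:ℝ) ≤ 1) := ⟨zero_le_one⟩

/-- A left-continuous t-norm on the unit interval `[0,1]`: a commutative, associative
binary operation with neutral element `1`, increasing in both arguments, that
distributes over suprema of nonempty sets (left-continuity). -/
structure Tnorm where
  mul : I → I → I
  mul_comm : ∀ x y, mul x y = mul y x
  mul_assoc : ∀ x y z, mul (mul x y) z = mul x (mul y z)
  mul_one : ∀ x, mul x 1 = x
  mul_le_mul : ∀ {a b c d : I}, a ≤ b → c ≤ d → mul a c ≤ mul b d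
  left_continuous : ∀ (x : I) (s : Set I), s.Nonempty → mul x (sSup s) = sSup (mul x '' s)

/-- The residuum of a t-norm: `(x ⇒ y) = sup {z | z ⊗ x ≤ y}`. -/
def Tnorm.res (T : Tnorm) (x y : I) : I := sSup {z : I | T.mul z x ≤ y}

/-- A fuzzy labeled transition system over actions `A`, propositions `P`, states `St`. -/
structure FLTS (A P St : Type) where
  delta : St → A → St → I
  label : St → P → I

/-- A crisp directed simulation between two FLTSs. -/
def IsDirSimulation {A P S S' : Type} (M : FLTS A P S) (M' : FLTS A P S')
    (Z : S → S' → Prop) : Prop :=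
  (∀ x x', Z x x' → ∀ p, M.label x p ≤ M'.label x' p) ∧
  (∀ x y x' (ρ : A), Z x x' → 0 < M.delta x ρ y →
    ∃ y', M.delta x ρ y ≤ M'.delta x' ρ y' ∧ Z y y') ∧
  (∀ x x' y' (ρ : A), Z x x' → 0 < M'.delta x' ρ y' →
    ∃ y, M'.delta x' ρ y' ≤ M.delta x ρ y ∧ Z y y')

mutual
/-- Formulas of fposΔPDL. -/
inductive PForm (A P : Type) : Type
  | const : I → PForm A P
  | prop : P → PForm A P
  | baaz : PForm A P → PForm A P
  | and : PForm A P → PForm A P → PForm A P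
  | or : PForm A P → PForm A P → PForm A P
  | impl : I → PForm A P → PForm A P
  | dia : PEProg A P → PForm A P → PForm A P
  | box : PUProg A P → PForm A P → PForm A P
/-- Programs of fpos∃ΔPDL. -/
inductive PEProg (A P : Type) : Type
  | act : A → PEProg A P
  | comp : PEProg A P → PEProg A P → PEProg A P
  | union : PEProg A P → PEProg A P → PEProg A P
  | star : PEProg A P → PEProg A P
  | test : PForm A P → PEProg A P
/-- Programs of fpos∀ΔPDL; `testImp φ a` is the program `(φ→a)?`. -/
inductive PUProg (A P : Type) : Type
  | act : A → PUProg A P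
  | comp : PUProg A P → PUProg A P → PUProg A P
  | union : PUProg A P → PUProg A P → PUProg A P
  | star : PUProg A P → PUProg A P
  | testImp : PForm A P → I → PUProg A P
end

/-- The ⊗-product of the values of `r` along the path `x :: l`. -/
def chainProd (T : Tnorm) {St : Type} (r : St → St → I) : St → List St → I
  | _, [] => 1
  | x, y :: l => T.mul (r x y) (chainProd T r y l)

mutual
/-- Semantics of fposΔPDL formulas. -/
def pformSem (T : Tnorm) {A P St : Type} (M : FLTS A P St) : PForm A P → St → I
  | .const a, _ => a
  | .prop p, x => M.label x p
  | .baaz φ, x => if pformSem T M φ x = 1 then 1 else 0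
  | .and φ ψ, x => min (pformSem T M φ x) (pformSem T M ψ x)
  | .or φ ψ, x => max (pformSem T M φ x) (pformSem T M ψ x)
  | .impl a φ, x => T.res a (pformSem T M φ x)
  | .dia α φ, x => ⨆ y, T.mul (peSem T M α x y) (pformSem T M φ y)
  | .box γ φ, x => ⨅ y, T.res (puSem T M γ x y) (pformSem T M φ y)
/-- Semantics of fpos∃ΔPDL programs. -/
def peSem (T : Tnorm) {A P St : Type} (M : FLTS A P St) : PEProg A P → St → St → I
  | .act ρ, x, y => M.delta x ρ y
  | .comp α β, x, y => ⨆ z, T.mul (peSem T M α x z) (peSem T M β z y)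
  | .union α β, x, y => max (peSem T M α x y) (peSem T M β x y)
  | .star α, x, y =>
      sSup {v : I | ∃ l : List St, l.getLastD x = y ∧ v = chainProd T (peSem T M α) x l}
  | .test φ, x, y => if x = y then pformSem T M φ x else 0
/-- Semantics of fpos∀ΔPDL programs. -/
def puSem (T : Tnorm) {A P St : Type} (M : FLTS A P St) : PUProg A P → St → St → I
  | .act ρ, x, y => M.delta x ρ y
  | .comp α β, x, y => ⨆ z, T.mul (puSem T M α x z) (puSem T M β z y)
  | .union α β, x, y => max (puSem T M α x y) (puSem T M β x y)
  | .star α, x, y =>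
      sSup {v : I | ∃ l : List St, l.getLastD x = y ∧ v = chainProd T (puSem T M α) x l}
  | .testImp φ a, x, y => if x = y then T.res (pformSem T M φ x) a else 0
end

/-- An FLTS is witnessed w.r.t. fposΔPDL: every supremum (resp. infimum) occurring
in the semantic clauses is attained by a greatest (resp. least) element. -/
def WitnessedP (T : Tnorm) {A P St : Type} (M : FLTS A P St) : Prop :=
  (∀ (α : PEProg A P) (φ : PForm A P) (x : St), ∃ y : St, ∀ z : St,
      T.mul (peSem T M α x z) (pformSem T M φ z) ≤
        T.mul (peSem T M α x y) (pformSem T M φ y)) ∧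
  (∀ (γ : PUProg A P) (φ : PForm A P) (x : St), ∃ y : St, ∀ z : St,
      T.res (puSem T M γ x y) (pformSem T M φ y) ≤
        T.res (puSem T M γ x z) (pformSem T M φ z)) ∧
  (∀ (α β : PEProg A P) (x y : St), ∃ z : St, ∀ w : St,
      T.mul (peSem T M α x w) (peSem T M β w y) ≤
        T.mul (peSem T M α x z) (peSem T M β z y)) ∧
  (∀ (α β : PUProg A P) (x y : St), ∃ z : St, ∀ w : St,
      T.mul (puSem T M α x w) (puSem T M β w y) ≤
        T.mul (puSem T M α x z) (puSem T M β z y)) ∧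
  (∀ (α : PEProg A P) (x y : St), ∃ l : List St, l.getLastD x = y ∧
      ∀ l' : List St, l'.getLastD x = y →
        chainProd T (peSem T M α) x l' ≤ chainProd T (peSem T M α) x l) ∧
  (∀ (α : PUProg A P) (x y : St), ∃ l : List St, l.getLastD x = y ∧
      ∀ l' : List St, l'.getLastD x = y →
        chainProd T (puSem T M α) x l' ≤ chainProd T (puSem T M α) x l)

/-! Call a fuzzy relation `r` matched by `r'` along `Z` when every positive `r`-transition from
`x` is dominated by an `r'`-transition from each `Z`-partner of `x`, ending in `Z`-partners. This
property survives composition, union, iteration and tests, provided the suprema defining composition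
and iteration of `r` are attained: otherwise approximating transitions might need different targets.
Tests make matching depend on preservation of formulas, while modalities make preservation of
formulas depend on matching, so both are proved by one simultaneous induction. Programs under `[·]`
occur contravariantly, hence are matched from the second system back to the first, along the
converse of `Z`. -/

namespace Tnorm

variable (T : Tnorm)

lemma mul_le_left (x y : I) : T.mul x y ≤ x :=
  (T.mul_le_mul le_rfl unitInterval.le_one').trans_eq (T.mul_one x)

lemma mul_le_right (x y : I) : T.mul x y ≤ y :=
  (T.mul_comm x y).trans_le (T.mul_le_left y x)

lemma res_le_res {a b c d : I} (hba : b ≤ a) (hcd : c ≤ d) : T.res a c ≤ T.res b d :=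
  sSup_le_sSup fun _ hz => (T.mul_le_mul le_rfl hba).trans (le_trans hz hcd)

lemma res_zero_left (c : I) : T.res 0 c = 1 :=
  le_antisymm unitInterval.le_one' <|
    le_sSup ((T.mul_le_right 1 0).trans (unitInterval.nonneg' : 0 ≤ c))

/-- Sup-`⊗` composition of fuzzy relations, the interpretation of `α ∘ β`. -/
def relComp {St : Type*} (r s : St → St → I) (x y : St) : I :=
  ⨆ z, T.mul (r x z) (s z y)

/-- The reflexive-transitive closure of a fuzzy relation, the interpretation of `α*`. As in
`chainProd`, a path from `x` is encoded by the list of states that come after `x`, so that it ends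
in `l.getLastD x`. -/
def relStar {St : Type} (r : St → St → I) (x y : St) : I :=
  sSup {v : I | ∃ l : List St, l.getLastD x = y ∧ v = chainProd T r x l}

/-- The suprema defining `T.relComp r s` are attained. -/
def CompAttained {St : Type*} (r s : St → St → I) : Prop :=
  ∀ x y : St, ∃ z : St, ∀ w : St, T.mul (r x w) (s w y) ≤ T.mul (r x z) (s z y)

/-- The suprema defining `T.relStar r` are attained. -/
def StarAttained {St : Type} (r : St → St → I) : Prop :=
  ∀ x y : St, ∃ l : List St, l.getLastD x = y ∧
    ∀ l' : List St, l'.getLastD x = y → chainProd T r x l' ≤ chainProd T r x l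

variable {T}

lemma CompAttained.exists_relComp_eq {St : Type*} {r s : St → St → I} (h : T.CompAttained r s)
    (x y : St) : ∃ z, T.relComp r s x y = T.mul (r x z) (s z y) := by
  obtain ⟨z, hz⟩ := h x y
  exact ⟨z, le_antisymm (iSup_le hz) (le_iSup (fun w => T.mul (r x w) (s w y)) z)⟩

lemma StarAttained.exists_relStar_eq {St : Type} {r : St → St → I} (h : T.StarAttained r)
    (x y : St) : ∃ l : List St, l.getLastD x = y ∧ T.relStar r x y = chainProd T r x l := by
  obtain ⟨l, hl, hmax⟩ := h x y
  refine ⟨l, hl, le_antisymm (sSup_le ?_) (le_sSup ⟨l, hl, rfl⟩)⟩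
  rintro _ ⟨l', hl', rfl⟩
  exact hmax l' hl'

end Tnorm

/-- Values do not decrease from `f` to `g` along `Z`: part (a) of the preservation lemma, for
arbitrary fuzzy sets in place of the semantics of a formula. -/
def PreservedAlong {S S' V : Type*} [LE V] (Z : S → S' → Prop) (f : S → V) (g : S' → V) : Prop :=
  ∀ ⦃a b⦄, Z a b → f a ≤ g b

/-- The fuzzy relation `r'` simulates `r` along `Z`: the back-and-forth clause of directed
simulations, and parts (b) and (c) of the preservation lemma, for arbitrary fuzzy relations. For the
backward direction, take `flip Z`. -/
def MatchedAlong {S S' V : Type*} [Preorder V] [Zero V] (Z : S → S' → Prop)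
    (r : S → S → V) (r' : S' → S' → V) : Prop :=
  ∀ ⦃x x'⦄, Z x x' → ∀ y, 0 < r x y → ∃ y', r x y ≤ r' x' y' ∧ Z y y'

namespace MatchedAlong

section Order

variable {S S' V : Type*} {Z : S → S' → Prop}

lemma max [LinearOrder V] [Zero V] {r s : S → S → V} {r' s' : S' → S' → V}
    (hr : MatchedAlong Z r r') (hs : MatchedAlong Z s s') :
    MatchedAlong Z (fun x y => max (r x y) (s x y)) (fun x y => max (r' x y) (s' x y)) := by
  intro x x' hZ y hpos
  rcases max_choice (r x y) (s x y) with hmax | hmax <;> simp only [hmax] at hpos ⊢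
  · obtain ⟨y', hle, hZy⟩ := hr hZ y hpos
    exact ⟨y', hle.trans (le_max_left _ _), hZy⟩
  · obtain ⟨y', hle, hZy⟩ := hs hZ y hpos
    exact ⟨y', hle.trans (le_max_right _ _), hZy⟩

lemma test [Preorder V] [Zero V] {f : S → V} {f' : S' → V} (hf : PreservedAlong Z f f') :
    MatchedAlong Z (fun x y => if x = y then f x else 0)
      (fun x y => if x = y then f' x else 0) := by
  intro x x' hZ y hpos
  obtain rfl : x = y := by
    by_contra hne
    simp only [if_neg hne, lt_irrefl] at hpos
  exact ⟨x', by simpa only [if_true] using hf hZ, hZ⟩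

end Order

variable {T : Tnorm}

lemma relComp {S S' : Type*} {Z : S → S' → Prop} {r s : S → S → I} {r' s' : S' → S' → I}
    (hr : MatchedAlong Z r r') (hs : MatchedAlong Z s s') (hatt : T.CompAttained r s) :
    MatchedAlong Z (T.relComp r s) (T.relComp r' s') := by
  intro x x' hZ y hpos
  obtain ⟨z, hz⟩ := hatt.exists_relComp_eq x y
  rw [hz] at hpos ⊢
  obtain ⟨z', hle_r, hZz⟩ := hr hZ z (hpos.trans_le (T.mul_le_left _ _))
  obtain ⟨y', hle_s, hZy⟩ := hs hZz y (hpos.trans_le (T.mul_le_right _ _))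
  exact ⟨y', le_iSup_of_le z' (T.mul_le_mul hle_r hle_s), hZy⟩

variable {S S' : Type} {Z : S → S' → Prop} {r : S → S → I} {r' : S' → S' → I}

lemma exists_chainProd_le (hr : MatchedAlong Z r r') :
    ∀ (l : List S) {x : S} {x' : S'}, Z x x' → 0 < chainProd T r x l →
      ∃ l' : List S', chainProd T r x l ≤ chainProd T r' x' l' ∧
        Z (l.getLastD x) (l'.getLastD x')
  | [], _, _, hZ, _ => ⟨[], le_rfl, hZ⟩
  | y :: l, _, _, hZ, hpos => by
    obtain ⟨y', hle, hZy⟩ := hr hZ y (hpos.trans_le (T.mul_le_left _ _))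
    obtain ⟨l', hle', hlast⟩ :=
      hr.exists_chainProd_le l hZy (hpos.trans_le (T.mul_le_right _ _))
    exact ⟨y' :: l', T.mul_le_mul hle hle', by simpa only [List.getLastD_cons] using hlast⟩

lemma relStar (hr : MatchedAlong Z r r') (hatt : T.StarAttained r) :
    MatchedAlong Z (T.relStar r) (T.relStar r') := by
  intro x x' hZ y hpos
  obtain ⟨l, rfl, hl⟩ := hatt.exists_relStar_eq x y
  rw [hl] at hpos ⊢
  obtain ⟨l', hle, hlast⟩ := hr.exists_chainProd_le l hZ hpos
  exact ⟨l'.getLastD x', hle.trans (le_sSup ⟨l', rfl, rfl⟩), hlast⟩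

end MatchedAlong

namespace PreservedAlong

variable {S S' : Type*} {Z : S → S' → Prop} {f : S → I} {f' : S' → I}

lemma baaz (hf : PreservedAlong Z f f') :
    PreservedAlong Z (fun x => if f x = 1 then (1 : I) else 0)
      (fun x => if f' x = 1 then (1 : I) else 0) := by
  intro x x' hZ
  dsimp only
  split_ifs with hx hx'
  · exact le_rfl
  · exact absurd (le_antisymm unitInterval.le_one' (hx ▸ hf hZ)) hx'
  · exact unitInterval.nonneg'
  · exact le_rfl

variable {T : Tnorm} {r : S → S → I} {r' : S' → S' → I}

lemma diamond (hr : MatchedAlong Z r r') (hf : PreservedAlong Z f f') :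
    PreservedAlong Z (fun x => ⨆ y, T.mul (r x y) (f y))
      (fun x => ⨆ y, T.mul (r' x y) (f' y)) := by
  refine fun x x' hZ => iSup_le fun y => ?_
  rcases (unitInterval.nonneg' : 0 ≤ r x y).eq_or_lt with hzero | hpos
  · exact ((T.mul_le_left _ _).trans_eq hzero.symm).trans unitInterval.nonneg'
  · obtain ⟨y', hle, hZy⟩ := hr hZ y hpos
    exact le_iSup_of_le y' (T.mul_le_mul hle (hf hZy))

lemma box (hr : MatchedAlong (flip Z) r' r) (hf : PreservedAlong Z f f') :
    PreservedAlong Z (fun x => ⨅ y, T.res (r x y) (f y))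
      (fun x => ⨅ y, T.res (r' x y) (f' y)) := by
  refine fun x x' hZ => le_iInf fun y' => ?_
  rcases (unitInterval.nonneg' : 0 ≤ r' x' y').eq_or_lt with hzero | hpos
  · rw [← hzero, T.res_zero_left]
    exact unitInterval.le_one'
  · obtain ⟨y, hle, hZy⟩ := hr hZ y' hpos
    exact iInf_le_of_le y (T.res_le_res hle (hf hZy))

end PreservedAlong

/-- Witnessedness restricted to the suprema that interpret fpos∃ΔPDL programs. -/
structure PEWitnessed (T : Tnorm) {A P St : Type} (M : FLTS A P St) : Prop where
  comp : ∀ α β : PEProg A P, T.CompAttained (peSem T M α) (peSem T M β)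
  star : ∀ α : PEProg A P, T.StarAttained (peSem T M α)

/-- Witnessedness restricted to the suprema that interpret fpos∀ΔPDL programs. -/
structure PUWitnessed (T : Tnorm) {A P St : Type} (M : FLTS A P St) : Prop where
  comp : ∀ α β : PUProg A P, T.CompAttained (puSem T M α) (puSem T M β)
  star : ∀ α : PUProg A P, T.StarAttained (puSem T M α)

namespace WitnessedP

variable {T : Tnorm} {A P St : Type} {M : FLTS A P St}

lemma peWitnessed (hM : WitnessedP T M) : PEWitnessed T M :=
  let ⟨_, _, hcomp, _, hstar, _⟩ := hM
  ⟨hcomp, hstar⟩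

lemma puWitnessed (hM : WitnessedP T M) : PUWitnessed T M :=
  let ⟨_, _, _, hcomp, _, hstar⟩ := hM
  ⟨hcomp, hstar⟩

end WitnessedP

namespace IsDirSimulation

variable {A P S S' : Type} {T : Tnorm} {M : FLTS A P S} {M' : FLTS A P S'} {Z : S → S' → Prop}

mutual

theorem preservedAlong_pformSem (hZ : IsDirSimulation M M' Z) (hM : PEWitnessed T M)
    (hM' : PUWitnessed T M') :
    ∀ φ : PForm A P, PreservedAlong Z (pformSem T M φ) (pformSem T M' φ)
  | .const _ => fun _ _ _ => le_rfl
  | .prop p => fun x x' hxx' => hZ.1 x x' hxx' p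
  | .baaz φ => (hZ.preservedAlong_pformSem hM hM' φ).baaz
  | .and φ ψ => fun _ _ hxx' =>
      min_le_min (hZ.preservedAlong_pformSem hM hM' φ hxx')
        (hZ.preservedAlong_pformSem hM hM' ψ hxx')
  | .or φ ψ => fun _ _ hxx' =>
      max_le_max (hZ.preservedAlong_pformSem hM hM' φ hxx')
        (hZ.preservedAlong_pformSem hM hM' ψ hxx')
  | .impl _ φ => fun _ _ hxx' => T.res_le_res le_rfl (hZ.preservedAlong_pformSem hM hM' φ hxx')
  | .dia α φ => .diamond (hZ.matchedAlong_peSem hM hM' α) (hZ.preservedAlong_pformSem hM hM' φ)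
  | .box γ φ => .box (hZ.matchedAlong_flip_puSem hM hM' γ) (hZ.preservedAlong_pformSem hM hM' φ)

theorem matchedAlong_peSem (hZ : IsDirSimulation M M' Z) (hM : PEWitnessed T M)
    (hM' : PUWitnessed T M') :
    ∀ α : PEProg A P, MatchedAlong Z (peSem T M α) (peSem T M' α)
  | .act ρ => fun x x' hxx' y => hZ.2.1 x y x' ρ hxx'
  | .comp α β =>
      (hZ.matchedAlong_peSem hM hM' α).relComp (hZ.matchedAlong_peSem hM hM' β) (hM.comp α β)
  | .union α β => (hZ.matchedAlong_peSem hM hM' α).max (hZ.matchedAlong_peSem hM hM' β)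
  | .star α => (hZ.matchedAlong_peSem hM hM' α).relStar (hM.star α)
  | .test φ => .test (hZ.preservedAlong_pformSem hM hM' φ)

theorem matchedAlong_flip_puSem (hZ : IsDirSimulation M M' Z) (hM : PEWitnessed T M)
    (hM' : PUWitnessed T M') :
    ∀ γ : PUProg A P, MatchedAlong (flip Z) (puSem T M' γ) (puSem T M γ)
  | .act ρ => fun x' x hxx' y' => hZ.2.2 x x' y' ρ hxx'
  | .comp α β =>
      (hZ.matchedAlong_flip_puSem hM hM' α).relComp (hZ.matchedAlong_flip_puSem hM hM' β)
        (hM'.comp α β)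
  | .union α β => (hZ.matchedAlong_flip_puSem hM hM' α).max (hZ.matchedAlong_flip_puSem hM hM' β)
  | .star α => (hZ.matchedAlong_flip_puSem hM hM' α).relStar (hM'.star α)
  | .testImp φ _ => .test fun _ _ hxx' =>
      T.res_le_res (hZ.preservedAlong_pformSem hM hM' φ hxx') le_rfl

end

end IsDirSimulation

theorem preservation_lemma_dirSimulation_fposPDL_general
    {A P S S' : Type} (T : Tnorm) (M : FLTS A P S) (M' : FLTS A P S')
    (hM : PEWitnessed T M) (hM' : PUWitnessed T M')
    (Z : S → S' → Prop) (hZ : IsDirSimulation M M' Z) :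
    (∀ (φ : PForm A P) (x : S) (x' : S'),
      Z x x' → pformSem T M φ x ≤ pformSem T M' φ x') ∧
    (∀ (α : PEProg A P) (x y : S) (x' : S'),
      Z x x' → 0 < peSem T M α x y →
        ∃ y' : S', peSem T M α x y ≤ peSem T M' α x' y' ∧ Z y y') ∧
    (∀ (γ : PUProg A P) (x : S) (x' y' : S'),
      Z x x' → 0 < puSem T M' γ x' y' →
        ∃ y : S, puSem T M' γ x' y' ≤ puSem T M γ x y ∧ Z y y') :=
  ⟨fun φ _ _ hxx' => hZ.preservedAlong_pformSem hM hM' φ hxx',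
    fun α _ target _ hxx' => hZ.matchedAlong_peSem hM hM' α hxx' target,
    fun γ _ _ target hxx' => hZ.matchedAlong_flip_puSem hM hM' γ hxx' target⟩

/-- Preservation lemma for crisp directed simulations between FLTSs witnessed w.r.t.
fposΔPDL: (a) fposΔPDL formulas are preserved, (b) positive fpos∃ΔPDL program
transitions are matched forward, (c) positive fpos∀ΔPDL program transitions are
matched backward. -/
theorem preservation_lemma_dirSimulation_fposPDL
    {A P S S' : Type} [Nonempty A] [Nonempty P] [Nonempty S] [Nonempty S']
    (T : Tnorm) (M : FLTS A P S) (M' : FLTS A P S')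
    (hM : WitnessedP T M) (hM' : WitnessedP T M')
    (Z : S → S' → Prop) (hZ : IsDirSimulation M M' Z) :
    (∀ (φ : PForm A P) (x : S) (x' : S'),
      Z x x' → pformSem T M φ x ≤ pformSem T M' φ x') ∧
    (∀ (α : PEProg A P) (x y : S) (x' : S'),
      Z x x' → 0 < peSem T M α x y →
        ∃ y' : S', peSem T M α x y ≤ peSem T M' α x' y' ∧ Z y y') ∧
    (∀ (γ : PUProg A P) (x : S) (x' y' : S'),
      Z x x' → 0 < puSem T M' γ x' y' →
        ∃ y : S, puSem T M' γ x' y' ≤ puSem T M γ x y ∧ Z y y') :=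
  preservation_lemma_dirSimulation_fposPDL_general T M M' hM.peWitnessed hM'.puWitnessed Z hZ
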